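/- Let ρ : [0,∞) → ℝ be differentiable on (0,∞) with ψ = ρ' and suppose φ(x) = ψ(x)/x is nonincreasing on (0,∞). Define u(x; r) = ρ(r) − (1/2) r ψ(r) + (1/2) φ(r) x². Then u(r; r) = ρ(r) for all r > 0, and u(x; r) ≥ ρ(x) for all x ≥ 0 and r > 0. -/

import Mathlib

theorem quadratic_majorization
    (ρ ψ : ℝ → ℝ) (hρ0 : ρ 0 = 0) (hmono : MonotoneOn ρ (Set.Ici 0))
    (hderiv : ∀ x > (0 : ℝ), HasDerivAt ρ (ψ x) x)
    (hψcont : ContinuousOn ψ (Set.Ici 0))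
    (hφanti : AntitoneOn (fun x => ψ x / x) (Set.Ioi 0)) :
    (∀ r > (0 : ℝ),
      ρ r - (1 / 2) * r * ψ r + (1 / 2) * (ψ r / r) * r ^ 2 = ρ r) ∧
    (∀ r > (0 : ℝ), ∀ x ≥ (0 : ℝ),
      ρ x ≤ ρ r - (1 / 2) * r * ψ r + (1 / 2) * (ψ r / r) * x ^ 2) := by
  have h1 : ∀ r > (0 : ℝ),
      ρ r - (1 / 2) * r * ψ r + (1 / 2) * (ψ r / r) * r ^ 2 = ρ r := by
    intro r hr
    field_simp
    ring
  refine ⟨h1, ?_⟩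
  intro r hr
  have hpos : ∀ x > (0 : ℝ),
      ρ x ≤ ρ r - (1 / 2) * r * ψ r + (1 / 2) * (ψ r / r) * x ^ 2 := by
    intro x hx
    have e := h1 r hr
    set c := ψ r / r with hc
    have hg : ∀ y > (0 : ℝ),
        HasDerivAt (fun y => ρ y - (1 / 2) * c * y ^ 2) (ψ y - c * y) y := by
      intro y hy
      have h := (hderiv y hy).sub ((hasDerivAt_pow 2 y).const_mul ((1 / 2) * c))
      refine h.congr_deriv ?_
      norm_num
      ring
    have key : ρ x - (1 / 2) * c * x ^ 2 ≤ ρ r - (1 / 2) * c * r ^ 2 := by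
      rcases lt_trichotomy x r with h | h | h
      · obtain ⟨z, hz, hz'⟩ := exists_hasDerivAt_eq_slope _ (fun y => ψ y - c * y) h
          (fun y hy => (hg y (lt_of_lt_of_le hx hy.1)).continuousAt.continuousWithinAt)
          (fun y hy => hg y (hx.trans hy.1))
        have hz0 : 0 < z := hx.trans hz.1
        have a : c ≤ ψ z / z := hφanti hz0 hr hz.2.le
        rw [le_div_iff₀ hz0] at a
        rw [eq_div_iff (by linarith)] at hz'
        have := mul_nonneg (sub_nonneg.2 a) (sub_nonneg.2 h.le)
        linarith
      · rw [h]
      · obtain ⟨z, hz, hz'⟩ := exists_hasDerivAt_eq_slope _ (fun y => ψ y - c * y) h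
          (fun y hy => (hg y (lt_of_lt_of_le hr hy.1)).continuousAt.continuousWithinAt)
          (fun y hy => hg y (hr.trans hy.1))
        have hz0 : 0 < z := hr.trans hz.1
        have a : ψ z / z ≤ c := hφanti hr hz0 hz.1.le
        rw [div_le_iff₀ hz0] at a
        rw [eq_div_iff (by linarith)] at hz'
        have := mul_nonneg (sub_nonneg.2 a) (sub_nonneg.2 h.le)
        linarith
    linarith
  intro x hx
  rcases hx.lt_or_eq with h | h
  · exact hpos x h
  · subst h
    have hcont : Continuous (fun x : ℝ =>
        ρ r - (1 / 2) * r * ψ r + (1 / 2) * (ψ r / r) * x ^ 2) := by fun_prop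
    have ht := (hcont.tendsto 0).mono_left (nhdsWithin_le_nhds (s := Set.Ioi 0))
    refine ge_of_tendsto ht ?_
    filter_upwards [self_mem_nhdsWithin] with y hy
    have hy' : (0 : ℝ) < y := hy
    exact (hmono Set.self_mem_Ici hy'.le hy'.le).trans (hpos y hy')
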